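/- For every y ≤ 0, A₁(y) = −(1/8) erfc(−√2 y) + (1/(2√(6π))) ∫_{−y}^∞ e^{−2t²/3} erfc(2t/√3) dt. -/

import Mathlib

open MeasureTheory Real Filter

/-- The error function `erf`. -/
noncomputable def erf (x : ℝ) : ℝ := (2 / Real.sqrt Real.pi) * ∫ t in (0 : ℝ)..x, Real.exp (-t ^ 2)

/-- The complementary error function `erfc`. -/
noncomputable def erfc (x : ℝ) : ℝ := 1 - erf x

noncomputable def A₁ (y : ℝ) : ℝ :=
  -(1 / (2 * Real.sqrt (2 * Real.pi))) *
    ∫ t in Set.Ioi (0 : ℝ), Real.exp (-2 * (t - y) ^ 2) * erfc t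

noncomputable def A₂ (y : ℝ) : ℝ :=
  (1 / Real.sqrt (2 * Real.pi)) *
    ∫ t in Set.Ioi (0 : ℝ),
      Real.exp (-2 * (t - y) ^ 2) * t * (Real.exp (-t ^ 2) / Real.sqrt Real.pi - t * erfc t)

noncomputable def A₃ (y : ℝ) : ℝ :=
  (1 / 4) * (1 + erf (Real.sqrt 2 * y)) *
    (-(y * Real.exp (-2 * y ^ 2)) / Real.sqrt (2 * Real.pi) +
      (1 / 4 + y ^ 2) * (1 - erf (Real.sqrt 2 * y)))

noncomputable def A₄ (y : ℝ) : ℝ :=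
  -(1 / Real.sqrt (2 * Real.pi)) *
    ∫ t₁ in Set.Ioi (0 : ℝ), ∫ t₂ in Set.Ioo (0 : ℝ) t₁,
      (1 / (t₁ - t₂)) *
        (Real.exp (-2 * (t₁ - y) ^ 2) * (erf (t₁ - t₂) + erf (Real.sqrt 2 * (t₂ - y))) +
          Real.exp (-2 * (t₂ - y) ^ 2) * (erf (t₁ - t₂) - erf (Real.sqrt 2 * (t₁ - y))))

noncomputable def A (y : ℝ) : ℝ := A₁ y + A₂ y + A₃ y + A₄ y

/-!
In the integral of `e^(-a u²) erf (u - s)` over `u > s`, write `erf (u - s)` as the integral of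
`e^(-(w - u)²)` over `s < w < u`. By Fubini one may integrate over `u > w` first, and completing
the square, `a u² + (w - u)² = a w² / (a + 1) + (a + 1) (u - w / (a + 1))²`, turns that inner
integral into an `erfc`. For `A₁ y` take `a = 2` and `s = -y`.
-/

section ErrorFunction

lemma integrable_exp_neg_sq : Integrable fun t : ℝ ↦ exp (-t ^ 2) := by
  simpa using integrable_exp_neg_mul_sq one_pos

lemma intervalIntegral_exp_neg_sq (x : ℝ) :
    ∫ t in (0 : ℝ)..x, exp (-t ^ 2) = √π / 2 * erf x := by
  rw [erf]
  field_simp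

lemma integral_Ioi_exp_neg_sq (x : ℝ) : ∫ t in Set.Ioi x, exp (-t ^ 2) = √π / 2 * erfc x := by
  have integral_split := intervalIntegral.integral_interval_add_Ioi (a := 0) (b := x)
    integrable_exp_neg_sq.integrableOn integrable_exp_neg_sq.integrableOn
  have half_line : ∫ t in Set.Ioi (0 : ℝ), exp (-t ^ 2) = √π / 2 := by
    simpa using integral_gaussian_Ioi 1
  rw [intervalIntegral_exp_neg_sq, half_line] at integral_split
  rw [erfc]
  linear_combination integral_split

lemma continuous_erf : Continuous erf :=
  continuous_const.mul (integrable_exp_neg_sq.continuous_primitive 0)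

lemma erf_neg (x : ℝ) : erf (-x) = -erf x := by
  have reflection := intervalIntegral.integral_comp_neg (a := 0) (b := x) fun t ↦ exp (-t ^ 2)
  simp only [neg_sq, neg_zero] at reflection
  rw [erf, erf, reflection, intervalIntegral.integral_symm 0 (-x), mul_neg, neg_neg]

lemma erfc_nonneg (x : ℝ) : 0 ≤ erfc x := by
  have tail_nonneg : 0 ≤ ∫ t in Set.Ioi x, exp (-t ^ 2) := integral_nonneg fun t ↦ (exp_pos _).le
  rw [integral_Ioi_exp_neg_sq] at tail_nonneg
  exact nonneg_of_mul_nonneg_right tail_nonneg (by positivity)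

lemma abs_erf_le_one (x : ℝ) : |erf x| ≤ 1 := by
  have erf_le_one (z : ℝ) : erf z ≤ 1 := sub_nonneg.mp (erfc_nonneg z)
  exact abs_le'.mpr ⟨erf_le_one x, erf_neg x ▸ erf_le_one (-x)⟩

end ErrorFunction

section HalfLineIntegrals

variable {E : Type*} [NormedAddCommGroup E] [NormedSpace ℝ E]

lemma integral_Ioi_comp_add_right (f : ℝ → E) (a c : ℝ) :
    ∫ x in Set.Ioi a, f (x + c) = ∫ x in Set.Ioi (a + c), f x := by
  simpa using (measurePreserving_add_right volume c).setIntegral_preimage_emb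
    (measurableEmbedding_addRight c) f (Set.Ioi (a + c))

lemma integral_Ioi_integral_Ioi_swap {α : Type*} [LinearOrder α] [TopologicalSpace α]
    [OrderClosedTopology α] [SecondCountableTopology α] [MeasurableSpace α]
    [OpensMeasurableSpace α] {μ ν : Measure α} [SFinite μ] [SFinite ν] {f : α → α → E}
    {s : α} (hf : IntegrableOn (Function.uncurry f) {p | s < p.1 ∧ p.1 < p.2} (μ.prod ν)) :
    ∫ w in Set.Ioi s, ∫ u in Set.Ioi w, f w u ∂ν ∂μ =
      ∫ u in Set.Ioi s, ∫ w in Set.Ioo s u, f w u ∂μ ∂ν := by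
  let T : Set (α × α) := {p | s < p.1 ∧ p.1 < p.2}
  have measurableSet_T : MeasurableSet T :=
    (measurableSet_lt measurable_const measurable_fst).inter
      (measurableSet_lt measurable_fst measurable_snd)
  let g (w u : α) : E := T.indicator (Function.uncurry f) (w, u)
  have integral_u (w : α) :
      ∫ u, g w u ∂ν = (Set.Ioi s).indicator (fun w ↦ ∫ u in Set.Ioi w, f w u ∂ν) w := by
    by_cases hw : s < w
    · rw [Set.indicator_of_mem (Set.mem_Ioi.mpr hw), ← integral_indicator measurableSet_Ioi]
      simp [g, T, Set.indicator, hw]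
    · simp [g, T, hw]
  have integral_w (u : α) :
      ∫ w, g w u ∂μ = (Set.Ioi s).indicator (fun u ↦ ∫ w in Set.Ioo s u, f w u ∂μ) u := by
    by_cases hu : s < u
    · rw [Set.indicator_of_mem (Set.mem_Ioi.mpr hu), ← integral_indicator measurableSet_Ioo]
      rfl
    · have notMem_T (w : α) : (w, u) ∉ T := fun h ↦ hu (h.1.trans h.2)
      simp [g, notMem_T, hu]
  have swap : ∫ w, ∫ u, g w u ∂ν ∂μ = ∫ u, ∫ w, g w u ∂μ ∂ν :=
    integral_integral_swap (hf.integrable_indicator measurableSet_T)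
  simpa only [integral_u, integral_w, integral_indicator measurableSet_Ioi] using swap

end HalfLineIntegrals

section GaussianIntegrals

variable {a : ℝ}

lemma integral_Ioo_exp_neg_sub_sq {s u : ℝ} (hsu : s ≤ u) :
    ∫ w in Set.Ioo s u, exp (-(w - u) ^ 2) = √π / 2 * erf (u - s) := by
  simp only [sub_sq_comm _ u]
  rw [← integral_Ioc_eq_integral_Ioo, ← intervalIntegral.integral_of_le hsu,
    intervalIntegral.integral_comp_sub_left fun t ↦ exp (-t ^ 2), sub_self,
    intervalIntegral_exp_neg_sq]

lemma integral_Ioi_exp_neg_mul_sub_sq (ha : 0 < a) (m x : ℝ) :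
    ∫ t in Set.Ioi x, exp (-a * (t - m) ^ 2) = √π / (2 * √a) * erfc (√a * (x - m)) := by
  have sqrt_a_pos : 0 < √a := sqrt_pos.mpr ha
  calc ∫ t in Set.Ioi x, exp (-a * (t - m) ^ 2)
      = ∫ t in Set.Ioi x, exp (-(√a * (t + -m)) ^ 2) := by
        simp only [mul_pow, sq_sqrt ha.le, neg_mul, sub_eq_add_neg]
    _ = ∫ t in Set.Ioi (x - m), exp (-(√a * t) ^ 2) :=
        integral_Ioi_comp_add_right (fun t ↦ exp (-(√a * t) ^ 2)) x (-m)
    _ = (√a)⁻¹ * ∫ t in Set.Ioi (√a * (x - m)), exp (-t ^ 2) :=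
        integral_comp_mul_left_Ioi (fun t ↦ exp (-t ^ 2)) (x - m) sqrt_a_pos
    _ = √π / (2 * √a) * erfc (√a * (x - m)) := by
        rw [integral_Ioi_exp_neg_sq]
        field_simp

lemma exp_neg_mul_sq_mul_exp_neg_sub_sq (ha : a + 1 ≠ 0) (u w : ℝ) :
    exp (-a * u ^ 2) * exp (-(w - u) ^ 2) =
      exp (-a * w ^ 2 / (a + 1)) * exp (-(a + 1) * (u - w / (a + 1)) ^ 2) := by
  rw [← exp_add, ← exp_add]
  congr 1
  field_simp
  ring

lemma integral_Ioi_exp_neg_mul_sq_mul_exp_neg_sub_sq (ha : 0 < a + 1) (w : ℝ) :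
    ∫ u in Set.Ioi w, exp (-a * u ^ 2) * exp (-(w - u) ^ 2) =
      √π / (2 * √(a + 1)) * (exp (-a * w ^ 2 / (a + 1)) * erfc (a * w / √(a + 1))) := by
  have erfc_argument : √(a + 1) * (w - w / (a + 1)) = a * w / √(a + 1) := by
    field_simp
    rw [sq_sqrt ha.le]
    ring
  simp only [exp_neg_mul_sq_mul_exp_neg_sub_sq ha.ne']
  rw [integral_const_mul, integral_Ioi_exp_neg_mul_sub_sq ha, erfc_argument]
  ring

lemma integrable_exp_neg_mul_sq_mul_exp_neg_sub_sq (ha : 0 < a) :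
    Integrable (Function.uncurry fun w u : ℝ ↦ exp (-a * u ^ 2) * exp (-(w - u) ^ 2))
      (volume.prod volume) :=
  (integrable_exp_neg_mul_sq ha).convolution_integrand (ContinuousLinearMap.mul ℝ ℝ)
    integrable_exp_neg_sq

lemma integral_Ioi_exp_neg_mul_sq_mul_erf (ha : 0 < a) (s : ℝ) :
    ∫ u in Set.Ioi s, exp (-a * u ^ 2) * erf (u - s) =
      1 / √(a + 1) *
        ∫ w in Set.Ioi s, exp (-a * w ^ 2 / (a + 1)) * erfc (a * w / √(a + 1)) := by
  have inner_integral {u : ℝ} (hu : u ∈ Set.Ioi s) :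
      ∫ w in Set.Ioo s u, exp (-a * u ^ 2) * exp (-(w - u) ^ 2) =
        √π / 2 * (exp (-a * u ^ 2) * erf (u - s)) := by
    rw [integral_const_mul, integral_Ioo_exp_neg_sub_sq (le_of_lt hu)]
    ring
  have fubini := integral_Ioi_integral_Ioi_swap (s := s)
    (integrable_exp_neg_mul_sq_mul_exp_neg_sub_sq ha).integrableOn
  simp only [integral_Ioi_exp_neg_mul_sq_mul_exp_neg_sub_sq (by positivity : 0 < a + 1)] at fubini
  rw [setIntegral_congr_fun measurableSet_Ioi fun u hu ↦ inner_integral hu, integral_const_mul,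
    integral_const_mul] at fubini
  field_simp at fubini ⊢
  exact fubini.symm

lemma integrable_exp_neg_mul_sq_mul_erf (ha : 0 < a) (s : ℝ) :
    Integrable fun u ↦ exp (-a * u ^ 2) * erf (u - s) :=
  (integrable_exp_neg_mul_sq ha).mul_bdd
    (continuous_erf.comp (continuous_sub_right s)).aestronglyMeasurable
    (Eventually.of_forall fun u ↦ abs_erf_le_one (u - s))

lemma integral_Ioi_exp_neg_mul_sq_mul_erfc (ha : 0 < a) (s : ℝ) :
    ∫ u in Set.Ioi s, exp (-a * u ^ 2) * erfc (u - s) =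
      √π / (2 * √a) * erfc (√a * s) -
        1 / √(a + 1) *
          ∫ w in Set.Ioi s, exp (-a * w ^ 2 / (a + 1)) * erfc (a * w / √(a + 1)) := by
  have gaussian_tail := integral_Ioi_exp_neg_mul_sub_sq ha 0 s
  simp only [sub_zero] at gaussian_tail
  simp only [erfc.eq_1 (_ - s), mul_sub, mul_one]
  rw [integral_sub (integrable_exp_neg_mul_sq ha).integrableOn
    (integrable_exp_neg_mul_sq_mul_erf ha s).integrableOn, gaussian_tail,
    integral_Ioi_exp_neg_mul_sq_mul_erf ha]

end GaussianIntegrals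

theorem A1_representation_general (y : ℝ) :
    A₁ y =
      -(1 / 8) * erfc (-√2 * y) +
        1 / (2 * √(6 * π)) *
          ∫ t in Set.Ioi (-y), exp (-2 * t ^ 2 / 3) * erfc (2 * t / √3) := by
  have translated : ∫ t in Set.Ioi (0 : ℝ), exp (-2 * (t - y) ^ 2) * erfc t =
      ∫ u in Set.Ioi (-y), exp (-2 * u ^ 2) * erfc (u - -y) := by
    simpa only [sub_neg_eq_add, sub_add_cancel, ← sub_eq_add_neg, zero_sub] using
      integral_Ioi_comp_add_right (fun u ↦ exp (-2 * u ^ 2) * erfc (u - -y)) 0 (-y)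
  have gaussian_erfc := integral_Ioi_exp_neg_mul_sq_mul_erfc two_pos (-y)
  rw [(by norm_num : (2 : ℝ) + 1 = 3), mul_neg, ← neg_mul] at gaussian_erfc
  have sqrt_six_pi : √(6 * π) = √(2 * π) * √3 := by
    rw [← sqrt_mul (by positivity)]
    ring_nf
  rw [A₁, translated, gaussian_erfc, sqrt_six_pi, sqrt_mul zero_le_two]
  field_simp
  linear_combination 4 * √π * erfc (-(√2 * y)) * √3 * sq_sqrt zero_le_two

/-- Exact alternative representation of `A₁` for `y ≤ 0`. -/
theorem A1_representation (y : ℝ) (hy : y ≤ 0) :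
    A₁ y =
      -(1 / 8) * erfc (-(Real.sqrt 2) * y) +
        (1 / (2 * Real.sqrt (6 * Real.pi))) *
          ∫ t in Set.Ioi (-y), Real.exp (-2 * t ^ 2 / 3) * erfc (2 * t / Real.sqrt 3) :=
  A1_representation_general y
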